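/- arXiv:quant-ph/9807006 — 2 statements merged into one kernel-verified Lean document; each statement's English description precedes it below -/
import Mathlib

section
/- Let n be a positive natural number and let M, N be n-qubit Pauli-type operators, i.e., each is a scalar c • P where c ∈ {1, -1, i, -i} and P is a Kronecker product of matrices from {I, X, Y, Z}. If there exists a nonzero vector ψ ∈ ℂ^(2^n) with M.mulVec ψ = ψ and N.mulVec ψ = ψ, then M and N commute: M * N = N * M. -/
open Matrix Kronecker

/-- The four single-qubit Pauli matrices: `0 ↦ I`, `1 ↦ X`, `2 ↦ Y`, `3 ↦ Z`. -/
noncomputable def pauli : Fin 4 → Matrix (Fin 2) (Fin 2) ℂ :=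
  ![1, !![0, 1; 1, 0], !![0, -Complex.I; Complex.I, 0], !![1, 0; 0, -1]]

/-- The `n`-fold Kronecker (tensor) product of an assignment of `2 × 2` matrices. -/
noncomputable def kronPow : (n : ℕ) → (Fin n → Matrix (Fin 2) (Fin 2) ℂ) →
    Matrix (Fin (2 ^ n)) (Fin (2 ^ n)) ℂ
  | 0, _ => 1
  | n + 1, f =>
      Matrix.reindex finProdFinEquiv finProdFinEquiv
        ((kronPow n fun k => f k.castSucc) ⊗ₖ f (Fin.last n))

/-- `M` is an `n`-qubit Pauli-type operator: a Kronecker product of Pauli matrices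
together with an overall phase `±1` or `±i`. -/
def IsPauliOp (n : ℕ) (M : Matrix (Fin (2 ^ n)) (Fin (2 ^ n)) ℂ) : Prop :=
  ∃ c ∈ ({1, -1, Complex.I, -Complex.I} : Set ℂ), ∃ f : Fin n → Fin 4,
    M = c • kronPow n fun k => pauli (f k)

theorem kronPow_mul (n : ℕ) (f g : Fin n → Matrix (Fin 2) (Fin 2) ℂ) :
    kronPow n f * kronPow n g = kronPow n fun k => f k * g k := by
  induction n with
  | zero => simp [kronPow]
  | succ n ih =>
    simp only [kronPow, reindex_apply]
    refine (submatrix_mul_equiv _ _ _ finProdFinEquiv.symm _).trans ?_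
    rw [← mul_kronecker_mul, ih]

theorem kronPow_smul (n : ℕ) (c : Fin n → ℂ) (f : Fin n → Matrix (Fin 2) (Fin 2) ℂ) :
    (kronPow n fun k => c k • f k) = (∏ k, c k) • kronPow n f := by
  induction n with
  | zero => simp [kronPow]
  | succ n ih =>
    simp only [kronPow, reindex_apply]
    rw [ih (fun k => c k.castSucc) (fun k => f k.castSucc), smul_kronecker, kronecker_smul,
      smul_smul, submatrix_smul, Fin.prod_univ_castSucc]
    rfl

theorem pauli_mul_eq_smul_mul (a b : Fin 4) :
    ∃ s : ℂ, pauli a * pauli b = s • (pauli b * pauli a) := by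
  by_cases h : a = 0 ∨ b = 0 ∨ a = b
  · refine ⟨1, ?_⟩
    rcases h with rfl | rfl | rfl <;> simp [pauli]
  · refine ⟨-1, ?_⟩
    fin_cases a <;> fin_cases b <;> simp_all [pauli]

/-- Pauli-type operators commute up to a scalar. -/
theorem IsPauliOp.mul_eq_smul_mul {n : ℕ} {M N : Matrix (Fin (2 ^ n)) (Fin (2 ^ n)) ℂ}
    (hM : IsPauliOp n M) (hN : IsPauliOp n N) : ∃ s : ℂ, M * N = s • (N * M) := by
  obtain ⟨c, -, f, rfl⟩ := hM
  obtain ⟨d, -, g, rfl⟩ := hN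
  choose s hs using fun k => pauli_mul_eq_smul_mul (f k) (g k)
  refine ⟨∏ k, s k, ?_⟩
  simp only [smul_mul_assoc, mul_smul_comm, kronPow_mul, hs, kronPow_smul, smul_smul]
  congr 1
  ring

/-- Two matrices that commute up to a scalar and fix a common nonzero vector commute. -/
theorem Matrix.commute_of_mul_eq_smul_mul_of_mulVec_eq {ι K : Type*} [Fintype ι] [Field K]
    {M N : Matrix ι ι K} {s : K} (h : M * N = s • (N * M)) {v : ι → K} (hv : v ≠ 0)
    (hM : M *ᵥ v = v) (hN : N *ᵥ v = v) : Commute M N := by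
  have hsv : v = s • v := by
    simpa [← mulVec_mulVec, smul_mulVec, hM, hN] using congrArg (· *ᵥ v) h
  have hs : s = 1 := smul_left_injective K hv (by simpa using hsv.symm)
  rw [commute_iff_eq, h, hs, one_smul]

/-- Two Pauli-group operators stabilizing a common nonzero state commute. -/
theorem stabilizer_elements_commute (n : ℕ) (hn : 0 < n)
    (M N : Matrix (Fin (2 ^ n)) (Fin (2 ^ n)) ℂ)
    (hM : IsPauliOp n M) (hN : IsPauliOp n N)
    (hstab : ∃ ψ : Fin (2 ^ n) → ℂ, ψ ≠ 0 ∧ M.mulVec ψ = ψ ∧ N.mulVec ψ = ψ) :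
    M * N = N * M := by
  obtain ⟨ψ, hψ, hMψ, hNψ⟩ := hstab
  obtain ⟨s, hs⟩ := hM.mul_eq_smul_mul hN
  exact commute_of_mul_eq_smul_mul_of_mulVec_eq hs hψ hMψ hNψ
end

section
/- Let I be the 2×2 identity over ℂ, CNOT = !![1,0,0,0;0,1,0,0;0,0,0,1;0,0,1,0], Pplus = (1/2) • !![1,1;1,1] (the projector onto |+⟩ = (|0⟩+|1⟩)/√2), and P0 = !![1,0;0,0] (the projector onto |0⟩). Then for all a, b ∈ ℂ, with input (a|0⟩+b|1⟩) ⊗ₜ (1/√2)•![1,0,0,1] ∈ ℂ⁸ (the data qubit joined with the Bell state (|00⟩+|11⟩)/√2 on qubits 2 and 3): ((Pplus ⊗ₖ P0 ⊗ₖ I) * (CNOT ⊗ₖ I)).mulVec (![a,b] ⊗ₜ ((1/√2) • ![1,0,0,1])) = (1/2) • (((1/√2) • ![1,1]) ⊗ₜ ![1,0] ⊗ₜ ![a,b]); that is, after Alice's CNOT from qubit 1 to qubit 2 and projecting qubit 1 onto |+⟩ (X-measurement outcome +1) and qubit 2 onto |0⟩ (Z-measurement outcome +1), qubit 3 holds the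 original state a|0⟩+b|1⟩. -/
open Matrix

noncomputable def I2 : Matrix (Fin 2) (Fin 2) ℂ := 1

/-- Controlled-NOT with control on the first qubit. -/
noncomputable def CNOT : Matrix (Fin 4) (Fin 4) ℂ :=
  !![1, 0, 0, 0; 0, 1, 0, 0; 0, 0, 0, 1; 0, 0, 1, 0]

/-- The projector onto `|+⟩ = (|0⟩+|1⟩)/√2`. -/
noncomputable def Pplus : Matrix (Fin 2) (Fin 2) ℂ := (1 / 2 : ℂ) • !![1, 1; 1, 1]

/-- The projector onto `|0⟩`. -/
noncomputable def P0 : Matrix (Fin 2) (Fin 2) ℂ := !![1, 0; 0, 0]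

/-- Kronecker product of square matrices, reindexed to `Fin (m * n)`
with lexicographic (big-endian) ordering of the basis. -/
noncomputable def mkron {m n : ℕ} (A : Matrix (Fin m) (Fin m) ℂ)
    (B : Matrix (Fin n) (Fin n) ℂ) : Matrix (Fin (m * n)) (Fin (m * n)) ℂ :=
  Matrix.reindex finProdFinEquiv finProdFinEquiv (Matrix.kroneckerMap (· * ·) A B)

infixl:100 " ⊗ₖ " => mkron

/-- Kronecker product of vectors, with lexicographic (big-endian) ordering. -/
noncomputable def tkron {m n : ℕ} (v : Fin m → ℂ) (w : Fin n → ℂ) : Fin (m * n) → ℂ :=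
  fun i => v (finProdFinEquiv.symm i).1 * w (finProdFinEquiv.symm i).2

infixl:100 " ⊗ₜ " => tkron

/-- The `+1, +1`-outcome branch of quantum teleportation: Alice's CNOT from qubit 1 to
qubit 2 followed by projecting qubit 1 onto `|+⟩` and qubit 2 onto `|0⟩` leaves Bob's
qubit 3 holding the original state `a|0⟩ + b|1⟩`. -/
theorem teleportation_plus_plus_branch (a b : ℂ) :
    (((Pplus ⊗ₖ P0 ⊗ₖ I2) * (CNOT ⊗ₖ I2) : Matrix (Fin 8) (Fin 8) ℂ)).mulVec
        (((![a, b] : Fin 2 → ℂ) ⊗ₜ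
          ((1 / (Real.sqrt 2 : ℂ)) • (![1, 0, 0, 1] : Fin 4 → ℂ)) : Fin 8 → ℂ)) =
      (1 / 2 : ℂ) •
        ((((1 / (Real.sqrt 2 : ℂ)) • (![1, 1] : Fin 2 → ℂ)) ⊗ₜ (![1, 0] : Fin 2 → ℂ) ⊗ₜ
          (![a, b] : Fin 2 → ℂ) : Fin 8 → ℂ)) := by
  rw [← Matrix.mulVec_mulVec]
  ext i
  fin_cases i <;>
    simp [Matrix.mulVec, dotProduct, Fin.sum_univ_eight, mkron, tkron, Pplus, P0, I2, CNOT,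
      finProdFinEquiv, Fin.divNat, Fin.modNat, Matrix.one_apply] <;>
    ring
end
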